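/- Let W be a finite type, p : W → ℝ a probability distribution (p(w) ≥ 0, Σ_{w∈W} p(w) = 1), and S ⊆ W a nonempty subset with p(w) > 0 for every w ∈ S and p(w) ≥ p(w') for every w ∈ S, w' ∉ S. Let g = Σ_{w∈S} p(w), and define p*(w) = p(w)/g for w ∈ S and p*(w) = 0 otherwise. Then H(p) ≥ H(p*), i.e., the residual entropy d = H(p) − H(p*) is nonnegative, where H(q) = −Σ_{w∈W} q(w) log q(w) with 0 · log 0 = 0. -/

import Mathlib

/-- Entropy (natural log), with the convention `0 * log 0 = 0`
(which holds automatically since `Real.log 0 = 0`). -/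
noncomputable def entropy {W : Type*} [Fintype W] (q : W → ℝ) : ℝ :=
  -∑ w, q w * Real.log (q w)

/-!
Write `η x = -x log x` and `g = ∑ w ∈ S, p w`. Since `η x / x = -log x` is decreasing, every pair
of a token `i` in `S` and a token `j` outside `S` satisfies `p j * η (p i) ≤ p i * η (p j)`.
Summing over all pairs shows that the share of `S` in the entropy is at most its share of the
total mass, while renormalizing divides `∑ w ∈ S, η (p w)` by `g` and adds `log g`. For a
probability distribution this gives `H(p) - H(p*) ≥ -log g ≥ 0`.
-/

open Real

/-- The distribution obtained by truncating `p` to `S` and dividing by the remaining mass, written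
`p*` in the informal statement. If `S` has mass zero, it is the zero function. -/
noncomputable def renormalize {W : Type*} [DecidableEq W] (p : W → ℝ) (S : Finset W) (w : W) : ℝ :=
  if w ∈ S then p w / ∑ i ∈ S, p i else 0

lemma mul_negMulLog_le_mul_negMulLog {x y : ℝ} (hx : 0 ≤ x) (hxy : x ≤ y) :
    x * negMulLog y ≤ y * negMulLog x := by
  rcases hx.eq_or_lt with rfl | hx
  · simp
  · have hy : 0 < y := hx.trans_le hxy
    calc x * negMulLog y = x * y * -log y := by rw [negMulLog]; ring
      _ ≤ x * y * -log x := by gcongr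
      _ = y * negMulLog x := by rw [negMulLog]; ring

lemma sum_mul_sum_negMulLog_le {ι : Type*} {p : ι → ℝ} {s t : Finset ι}
    (hp : ∀ j ∈ t, 0 ≤ p j) (hle : ∀ i ∈ s, ∀ j ∈ t, p j ≤ p i) :
    (∑ j ∈ t, p j) * ∑ i ∈ s, negMulLog (p i) ≤ (∑ i ∈ s, p i) * ∑ j ∈ t, negMulLog (p j) := by
  rw [Finset.sum_mul_sum, Finset.sum_mul_sum, Finset.sum_comm]
  exact Finset.sum_le_sum fun i hi ↦ Finset.sum_le_sum fun j hj ↦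
    mul_negMulLog_le_mul_negMulLog (hp j hj) (hle i hi j hj)

lemma sum_negMulLog_div_sum {ι : Type*} {p : ι → ℝ} {s : Finset ι} (hs : ∑ i ∈ s, p i ≠ 0) :
    ∑ i ∈ s, negMulLog (p i / ∑ j ∈ s, p j) =
      (∑ i ∈ s, negMulLog (p i)) / (∑ i ∈ s, p i) + log (∑ i ∈ s, p i) := by
  simp only [div_eq_mul_inv, negMulLog_mul, Finset.sum_add_distrib, ← Finset.mul_sum,
    ← Finset.sum_mul]
  rw [negMulLog, log_inv]
  field_simp

section Entropy

variable {W : Type*} [Fintype W]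

lemma entropy_eq_sum_negMulLog (q : W → ℝ) : entropy q = ∑ w, negMulLog (q w) := by
  simp only [entropy, negMulLog, neg_mul, Finset.sum_neg_distrib]

variable {p : W → ℝ} {S : Finset W}

lemma sum_mul_sum_negMulLog_le_sum_mul_entropy (hp : ∀ w, 0 ≤ p w)
    (htop : ∀ w ∈ S, ∀ w' ∉ S, p w' ≤ p w) :
    (∑ w, p w) * ∑ w ∈ S, negMulLog (p w) ≤ (∑ w ∈ S, p w) * entropy p := by
  classical
  have hpairs : (∑ w ∈ Sᶜ, p w) * ∑ w ∈ S, negMulLog (p w) ≤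
      (∑ w ∈ S, p w) * ∑ w ∈ Sᶜ, negMulLog (p w) :=
    sum_mul_sum_negMulLog_le (fun w _ ↦ hp w)
      fun w hw w' hw' ↦ htop w hw w' (Finset.mem_compl.mp hw')
  rw [entropy_eq_sum_negMulLog, ← Finset.sum_add_sum_compl S p,
    ← Finset.sum_add_sum_compl S fun w ↦ negMulLog (p w)]
  linarith

variable [DecidableEq W]

lemma entropy_renormalize (hS : ∑ w ∈ S, p w ≠ 0) :
    entropy (renormalize p S) =
      (∑ w ∈ S, negMulLog (p w)) / (∑ w ∈ S, p w) + log (∑ w ∈ S, p w) := by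
  simp only [entropy_eq_sum_negMulLog, renormalize, apply_ite negMulLog, negMulLog_zero,
    Finset.sum_ite_mem, Finset.univ_inter, sum_negMulLog_div_sum hS]

theorem entropy_ge_entropy_renormalized_general (hp : ∀ w, 0 ≤ p w)
    (hS : 0 < ∑ w ∈ S, p w) (htop : ∀ w ∈ S, ∀ w' ∉ S, p w' ≤ p w) :
    entropy p ≥ (∑ w, p w) * (entropy (renormalize p S) - log (∑ w ∈ S, p w)) := by
  rw [entropy_renormalize hS.ne', add_sub_cancel_right, ge_iff_le, mul_div_assoc', div_le_iff₀' hS]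
  exact sum_mul_sum_negMulLog_le_sum_mul_entropy hp htop

end Entropy

/-- Corollary of Theorem 1: the residual entropy `H(p) - H(p*)` is
nonnegative, i.e. `H(p) ≥ H(p*)`. -/
theorem entropy_ge_entropy_renormalized
    {W : Type*} [Fintype W] [DecidableEq W] (p : W → ℝ)
    (hp : ∀ w, 0 ≤ p w) (hsum : ∑ w, p w = 1)
    (S : Finset W) (hS : S.Nonempty)
    (hpos : ∀ w ∈ S, 0 < p w)
    (htop : ∀ w ∈ S, ∀ w' ∉ S, p w' ≤ p w)
    (g : ℝ) (hg : g = ∑ w ∈ S, p w)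
    (pStar : W → ℝ) (hpStar : ∀ w, pStar w = if w ∈ S then p w / g else 0) :
    entropy p ≥ entropy pStar := by
  obtain rfl : pStar = renormalize p S := funext fun w ↦ by rw [hpStar, hg, renormalize]
  have hS_pos : 0 < ∑ w ∈ S, p w := Finset.sum_pos hpos hS
  have hS_le_one : ∑ w ∈ S, p w ≤ 1 := hsum ▸ Finset.sum_le_univ_sum_of_nonneg hp
  have hresidual := entropy_ge_entropy_renormalized_general hp hS_pos htop
  rw [hsum, one_mul] at hresidual
  linarith [log_nonpos hS_pos.le hS_le_one]
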